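/- arXiv:cs/0611030 — 4 statements merged into one kernel-verified Lean document; each statement's English description precedes it below -/
import Mathlib

section
/- q-exponential as a limit of n-fold q-products: fix real q ≠ 1 and x ∈ ℝ with 1 + (1−q)x > 0. For n ∈ ℕ, the n-fold q-product of (1 + x/n) with itself equals (n·(1 + x/n)^{1−q} − (n−1))^{1/(1−q)} whenever 1 + x/n > 0 and n·(1 + x/n)^{1−q} − (n−1) > 0; these positivity conditions hold for all sufficiently large n, and the sequence n ↦ (n·(1 + x/n)^{1−q} − (n−1))^{1/(1−q)} converges to e_q^x = (1 + (1−q)x)^{1/(1−q)} as n → ∞. -/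
/-!
Write `a = y^(1-q) - 1`. Each `q`-multiplication by `y` adds `a` to the `(1-q)`-th power, so
`y^(⊗_q k) = (1 + k a)^(1/(1-q))` as long as `1 + k a > 0` (`qprodPow_eq`). For `y = 1 + x/n`
and `k = n` the base `1 + n ((1 + x/n)^(1-q) - 1)` is `1` plus a difference quotient and tends
to `1 + (1-q) x` (`tendsto_qprodPow_base`). This limit is positive, which gives both the
eventual positivity and, by continuity of the power at a nonzero base, the convergence.
-/

open Real Filter Topology

/-- The `q`-exponential: `e_q^x = (1 + (1-q)x)^(1/(1-q))`. -/
noncomputable def qexp (q x : ℝ) : ℝ := (1 + (1 - q) * x) ^ (1 / (1 - q))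

/-- The `q`-product: `x ⊗_q y = (x^(1-q) + y^(1-q) - 1)^(1/(1-q))` when
`x, y > 0` and `x^(1-q) + y^(1-q) - 1 > 0`, and `0` otherwise. -/
noncomputable def qprod (q x y : ℝ) : ℝ :=
  if 0 < x ∧ 0 < y ∧ 0 < x ^ (1 - q) + y ^ (1 - q) - 1 then
    (x ^ (1 - q) + y ^ (1 - q) - 1) ^ (1 / (1 - q))
  else 0

/-- The `n`-fold `q`-product `x^(⊗_q n) = x ⊗_q ⋯ ⊗_q x` (`n` factors). -/
noncomputable def qprodPow (q x : ℝ) : ℕ → ℝ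
  | 0 => 1
  | n + 1 => qprod q (qprodPow q x n) x

/-- Closed form of the `k`-fold `q`-product in terms of `a = y^(1-q) - 1`. Positivity of
`1 + k a` passes down to all smaller `k`, so the cutoff in `qprod` is never active. -/
lemma qprodPow_eq (q : ℝ) (hq : q ≠ 1) (y : ℝ) (hy : 0 < y) (k : ℕ)
    (hk : 0 < 1 + k * (y ^ (1 - q) - 1)) :
    qprodPow q y k = (1 + k * (y ^ (1 - q) - 1)) ^ (1 / (1 - q)) := by
  have hp : 1 - q ≠ 0 := sub_ne_zero.mpr hq.symm
  induction k with
  | zero => simp [qprodPow]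
  | succ k ih =>
    push_cast at hk
    have hk0 : (0 : ℝ) ≤ k := k.cast_nonneg
    have hpos : 0 < 1 + k * (y ^ (1 - q) - 1) := by
      rcases le_or_gt 0 (y ^ (1 - q) - 1) with h | h
      · positivity
      · linarith
    have hpow : ((1 + k * (y ^ (1 - q) - 1)) ^ (1 / (1 - q))) ^ (1 - q)
        = 1 + k * (y ^ (1 - q) - 1) := by
      rw [← Real.rpow_mul hpos.le, one_div_mul_cancel hp, Real.rpow_one]
    have hstep : 1 + k * (y ^ (1 - q) - 1) + y ^ (1 - q) - 1
        = 1 + ((k : ℝ) + 1) * (y ^ (1 - q) - 1) := by ring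
    rw [qprodPow, ih hpos, qprod, hpow, hstep,
      if_pos ⟨Real.rpow_pos_of_pos hpos _, hy, hk⟩]
    push_cast
    rfl

/-- The base of the outer power converges: `n ((1 + x/n)^p - 1)` is the difference quotient
at `0`, with increment `1/n`, of `t ↦ (1 + x t)^p`. -/
lemma tendsto_qprodPow_base (p x : ℝ) :
    Tendsto (fun n : ℕ => n * (1 + x / n) ^ p - ((n : ℝ) - 1)) atTop (𝓝 (1 + p * x)) := by
  have hderiv : HasDerivAt (fun t : ℝ => (1 + x * t) ^ p) (p * x) 0 := by
    have h := (((hasDerivAt_id (0 : ℝ)).const_mul x).const_add 1).rpow_const (p := p)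
      (Or.inl (by simp))
    have e : x * 1 * p * (1 + x * id 0) ^ (p - 1) = p * x := by
      simp [mul_comm]
    rw [e] at h
    exact h
  have hinv : Tendsto (fun n : ℕ => (n : ℝ)⁻¹) atTop (𝓝[≠] 0) := by
    refine tendsto_nhdsWithin_iff.mpr ⟨tendsto_inv_atTop_nhds_zero_nat, ?_⟩
    filter_upwards [eventually_gt_atTop 0] with n hn
    have : (n : ℝ) ≠ 0 := by positivity
    simpa using this
  refine ((hderiv.tendsto_slope.comp hinv).const_add 1).congr fun n => ?_
  simp [slope_def_field, div_eq_mul_inv]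
  ring

/-- `q`-exponential as a limit of `n`-fold `q`-products:
`(1 + x/n)^(⊗_q n) = (n (1 + x/n)^(1-q) - (n-1))^(1/(1-q))` under the stated
positivity conditions, these conditions hold eventually, and the sequence
converges to `e_q^x`. -/
theorem qexp_limit_of_qprodPow (q : ℝ) (hq : q ≠ 1) (x : ℝ)
    (hx : 0 < 1 + (1 - q) * x) :
    (∀ n : ℕ, 0 < 1 + x / n →
       0 < n * (1 + x / n) ^ (1 - q) - ((n : ℝ) - 1) →
       qprodPow q (1 + x / n) n =
         (n * (1 + x / n) ^ (1 - q) - ((n : ℝ) - 1)) ^ (1 / (1 - q))) ∧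
    (∀ᶠ n : ℕ in atTop, 0 < 1 + x / n ∧
       0 < n * (1 + x / n) ^ (1 - q) - ((n : ℝ) - 1)) ∧
    Tendsto
      (fun n : ℕ => (n * (1 + x / n) ^ (1 - q) - ((n : ℝ) - 1)) ^ (1 / (1 - q)))
      atTop (𝓝 (qexp q x)) := by
  have hbase := tendsto_qprodPow_base (1 - q) x
  refine ⟨fun n h1 h2 => ?_, ?_, ?_⟩
  · have e : n * (1 + x / n) ^ (1 - q) - ((n : ℝ) - 1)
        = 1 + n * ((1 + x / n) ^ (1 - q) - 1) := by ring
    rw [e] at h2 ⊢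
    exact qprodPow_eq q hq _ h1 n h2
  · have h1 : Tendsto (fun n : ℕ => 1 + x / (n : ℝ)) atTop (𝓝 (1 + 0)) :=
      (tendsto_const_div_atTop_nhds_zero_nat x).const_add 1
    exact (h1.eventually_const_lt (by norm_num)).and (hbase.eventually_const_lt hx)
  · exact hbase.rpow_const (Or.inl hx.ne')
end

section
/- Value of the minimum Tsallis relative entropy under q-expectation constraints: let q > 0, q ≠ 1, r a pdf on X, u_1,…,u_M : X → ℝ measurable, β ∈ ℝ^M, and assume r(x)^{1−q} − (1−q)·Σ_{m=1}^M β_m u_m(x) > 0 for μ-a.e. x. Suppose Ẑ_q = ∫_X (r(x)^{1−q} − (1−q)·Σ_m β_m u_m(x))^{1/(1−q)} dμ(x) ∈ (0,∞), and define p(x) = (r(x)^{1−q} − (1−q)·Σ_m β_m u_m(x))^{1/(1−q)} / Ẑ_q. Set ⟨u_m⟩_q = ∫_X u_m p^q dμ and assume these integrals and ∫_X p^q r^{1−q} dμ are finite. Then I_q(p‖r) = −ln_q Ẑ_q − Σ_{m=1}^M β_m ⟨u_m⟩_q. -/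
/-!
Write `B x` for the bracket `r x ^ (1 - q) - (1 - q) * ∑ m, β m * u m x`. Since `B > 0` a.e. and
`p = B ^ (1 / (1 - q)) / Z`, one has `B = (p Z) ^ (1 - q)`; multiplying by `p ^ q` gives
`p ^ q r ^ (1 - q) = Z ^ (1 - q) p + (1 - q) ∑ m, β m u m p ^ q` a.e. Integrating, with `∫ p = 1`,
yields `∫ p ^ q r ^ (1 - q) = Z ^ (1 - q) + (1 - q) ∑ m, β m ⟨u m⟩_q`, and the claim is a
rearrangement of this.
-/

open MeasureTheory Real

/-- A probability density function on `(X, 𝔐)` with respect to the measure `μ`: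
a nonnegative measurable function integrating to 1. -/
def IsPdf {X : Type*} [MeasurableSpace X] (μ : Measure X) (f : X → ℝ) : Prop :=
  Measurable f ∧ (∀ x, 0 ≤ f x) ∧ ∫ x, f x ∂μ = 1

/-- The `q`-logarithm: `ln_q x = (x^(1-q) - 1)/(1-q)`. -/
noncomputable def qlog (q x : ℝ) : ℝ := (x ^ (1 - q) - 1) / (1 - q)

/-- Tsallis relative entropy `I_q(p‖r) = (∫ p^q r^(1-q) dμ - 1)/(q-1)`. -/
noncomputable def tsallisRelEnt {X : Type*} [MeasurableSpace X] (μ : Measure X)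
    (q : ℝ) (p r : X → ℝ) : ℝ :=
  ((∫ x, p x ^ q * r x ^ (1 - q) ∂μ) - 1) / (q - 1)

/-- Value of the minimum Tsallis relative entropy under `q`-expectation
constraints: `I_q(p‖r) = - ln_q Ẑ_q - ∑ m, β m * ⟨u m⟩_q`. -/
theorem minimum_tsallisRelEnt_value
    {X : Type*} [MeasurableSpace X] (μ : Measure X) [SigmaFinite μ]
    (q : ℝ) (hq0 : 0 < q) (hq1 : q ≠ 1)
    (M : ℕ) (r : X → ℝ) (hr : IsPdf μ r)
    (u : Fin M → X → ℝ) (hu : ∀ m, Measurable (u m)) (β : Fin M → ℝ)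
    (hbracket : ∀ᵐ x ∂μ, 0 < r x ^ (1 - q) - (1 - q) * ∑ m, β m * u m x)
    (Z : ℝ)
    (hZdef : Z = ∫ x,
      (r x ^ (1 - q) - (1 - q) * ∑ m, β m * u m x) ^ (1 / (1 - q)) ∂μ)
    (hZpos : 0 < Z)
    (hZfin : Integrable
      (fun x => (r x ^ (1 - q) - (1 - q) * ∑ m, β m * u m x) ^ (1 / (1 - q))) μ)
    (p : X → ℝ)
    (hp : ∀ x, p x =
      (r x ^ (1 - q) - (1 - q) * ∑ m, β m * u m x) ^ (1 / (1 - q)) / Z)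
    (hintu : ∀ m, Integrable (fun x => u m x * p x ^ q) μ)
    (hintpr : Integrable (fun x => p x ^ q * r x ^ (1 - q)) μ) :
    tsallisRelEnt μ q p r =
      - qlog q Z - ∑ m, β m * ∫ x, u m x * p x ^ q ∂μ := by
  have hq : (1 - q) ≠ 0 := sub_ne_zero.mpr hq1.symm
  have hpint : ∫ x, p x ∂μ = 1 := by
    simp_rw [hp]
    rw [integral_div, ← hZdef, div_self hZpos.ne']
  have hpi : Integrable p μ := by
    rw [funext hp]
    exact hZfin.div_const Z
  have hpt : (fun x => p x ^ q * r x ^ (1 - q)) =ᵐ[μ]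
      fun x => Z ^ (1 - q) * p x + (1 - q) * ∑ m, β m * (u m x * p x ^ q) := by
    filter_upwards [hbracket] with x hx
    have hppos : 0 < p x := by
      rw [hp]
      exact div_pos (rpow_pos_of_pos hx _) hZpos
    have hB : r x ^ (1 - q) - (1 - q) * ∑ m, β m * u m x = (p x * Z) ^ (1 - q) := by
      rw [hp, div_mul_cancel₀ _ hZpos.ne', ← rpow_mul hx.le, one_div_mul_cancel hq, rpow_one]
    have hpp : p x ^ q * p x ^ (1 - q) = p x := by
      rw [← rpow_add hppos, add_sub_cancel, rpow_one]
    have hsum : ∑ m, β m * (u m x * p x ^ q) = (∑ m, β m * u m x) * p x ^ q := by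
      rw [Finset.sum_mul]
      exact Finset.sum_congr rfl fun m _ => (mul_assoc _ _ _).symm
    rw [mul_rpow hppos.le hZpos.le] at hB
    rw [hsum]
    linear_combination p x ^ q * hB + Z ^ (1 - q) * hpp
  have hi : ∀ m, Integrable (fun x => β m * (u m x * p x ^ q)) μ :=
    fun m => (hintu m).const_mul _
  have hint : ∫ x, p x ^ q * r x ^ (1 - q) ∂μ =
      Z ^ (1 - q) + (1 - q) * ∑ m, β m * ∫ x, u m x * p x ^ q ∂μ := by
    rw [integral_congr_ae hpt,
      integral_add (hpi.const_mul _) ((integrable_finsetSum _ fun m _ => hi m).const_mul _),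
      integral_const_mul, integral_const_mul, hpint, mul_one,
      integral_finsetSum _ fun m _ => hi m]
    simp_rw [integral_const_mul]
  rw [tsallisRelEnt, qlog, hint]
  generalize ∑ m, β m * ∫ x, u m x * p x ^ q ∂μ = S
  rw [← neg_sub 1 q, div_neg]
  field_simp
  ring
end

section
/- Key intermediate identity for the nonextensive triangle equality: let q > 0, q ≠ 1, r a pdf on X, u_1,…,u_M : X → ℝ measurable, β ∈ ℝ^M with r(x)^{1−q} − (1−q)·Σ_{m=1}^M β_m u_m(x) > 0 for μ-a.e. x, Ẑ_q = ∫_X (r(x)^{1−q} − (1−q)·Σ_m β_m u_m(x))^{1/(1−q)} dμ(x) ∈ (0,∞), and p(x) = (r(x)^{1−q} − (1−q)·Σ_m β_m u_m(x))^{1/(1−q)} / Ẑ_q. Let l be a pdf with ⟨w_m⟩_q = ∫_X u_m l^q dμ finite for each m, and assume ∫_X l^q dμ, ∫_X l^q r^{1−q} dμ and ∫_X l^q p^{1−q} dμ are finite. Then I_q(l‖p) = I_q(l‖r) + Σ_{m=1}^M β_m ⟨w_m⟩_q + ln_q Ẑ_q − (1−q)·ln_q Ẑ_q·I_q(l‖p).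 -/
/-!
Since `p = B ^ (1/(1-q)) / Z` with `B = r ^ (1-q) - (1-q) ∑ m, β m * u m > 0` a.e., one has
`Z ^ (1-q) * p ^ (1-q) = B` a.e. Multiplying by `l ^ q` and integrating gives
`Z ^ (1-q) ∫ l ^ q p ^ (1-q) = ∫ l ^ q r ^ (1-q) - (1-q) ∑ m, β m ⟨w m⟩_q`,
which is the claimed identity after expanding `qlog` and `tsallisRelEnt`.
-/

open MeasureTheory Real

/-- Key intermediate identity for the nonextensive triangle equality:
`I_q(l‖p) = I_q(l‖r) + ∑ m, β m ⟨w m⟩_q + ln_q Ẑ_q - (1-q) ln_q Ẑ_q I_q(l‖p)`. -/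
theorem key_intermediate_identity
    {X : Type*} [MeasurableSpace X] (μ : Measure X) [SigmaFinite μ]
    (q : ℝ) (hq0 : 0 < q) (hq1 : q ≠ 1)
    (M : ℕ) (r : X → ℝ) (hr : IsPdf μ r)
    (u : Fin M → X → ℝ) (hu : ∀ m, Measurable (u m)) (β : Fin M → ℝ)
    (hbracket : ∀ᵐ x ∂μ, 0 < r x ^ (1 - q) - (1 - q) * ∑ m, β m * u m x)
    (Z : ℝ)
    (hZdef : Z = ∫ x,
      (r x ^ (1 - q) - (1 - q) * ∑ m, β m * u m x) ^ (1 / (1 - q)) ∂μ)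
    (hZpos : 0 < Z)
    (hZfin : Integrable
      (fun x => (r x ^ (1 - q) - (1 - q) * ∑ m, β m * u m x) ^ (1 / (1 - q))) μ)
    (p : X → ℝ)
    (hp : ∀ x, p x =
      (r x ^ (1 - q) - (1 - q) * ∑ m, β m * u m x) ^ (1 / (1 - q)) / Z)
    (l : X → ℝ) (hl : IsPdf μ l)
    (hintw : ∀ m, Integrable (fun x => u m x * l x ^ q) μ)
    (hintlq : Integrable (fun x => l x ^ q) μ)
    (hintlr : Integrable (fun x => l x ^ q * r x ^ (1 - q)) μ)
    (hintlp : Integrable (fun x => l x ^ q * p x ^ (1 - q)) μ) :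
    tsallisRelEnt μ q l p =
      tsallisRelEnt μ q l r + (∑ m, β m * ∫ x, u m x * l x ^ q ∂μ)
        + qlog q Z - (1 - q) * qlog q Z * tsallisRelEnt μ q l p := by
  have h1q : 1 - q ≠ 0 := sub_ne_zero.mpr hq1.symm
  have hq1' : q - 1 ≠ 0 := sub_ne_zero.mpr hq1
  -- Undoing the `1/(1-q)` power in `p`; this needs the bracket to be positive.
  have hpt : ∀ᵐ x ∂μ, Z ^ (1 - q) * (l x ^ q * p x ^ (1 - q)) =
      l x ^ q * r x ^ (1 - q) - (1 - q) * ∑ m, β m * (u m x * l x ^ q) := by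
    filter_upwards [hbracket] with x hx
    have hsum : ∑ m, β m * (u m x * l x ^ q) = l x ^ q * ∑ m, β m * u m x := by
      rw [Finset.mul_sum]
      exact Finset.sum_congr rfl fun m _ => by ring
    have hpow : Z ^ (1 - q) * p x ^ (1 - q) =
        r x ^ (1 - q) - (1 - q) * ∑ m, β m * u m x := by
      rw [hp x, ← Real.mul_rpow hZpos.le (div_nonneg (Real.rpow_nonneg hx.le _) hZpos.le),
        mul_div_cancel₀ _ hZpos.ne', ← Real.rpow_mul hx.le, one_div_mul_cancel h1q,
        Real.rpow_one]
    rw [hsum]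
    linear_combination l x ^ q * hpow
  have hint : ∀ m ∈ Finset.univ, Integrable (fun x => β m * (u m x * l x ^ q)) μ :=
    fun m _ => (hintw m).const_mul (β m)
  have key : Z ^ (1 - q) * ∫ x, l x ^ q * p x ^ (1 - q) ∂μ =
      (∫ x, l x ^ q * r x ^ (1 - q) ∂μ)
        - (1 - q) * ∑ m, β m * ∫ x, u m x * l x ^ q ∂μ := by
    rw [← integral_const_mul, integral_congr_ae hpt,
      integral_sub hintlr ((integrable_finsetSum _ hint).const_mul _),
      integral_const_mul, integral_finsetSum _ hint]
    simp only [integral_const_mul]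
  unfold tsallisRelEnt qlog
  generalize (∫ x, l x ^ q * p x ^ (1 - q) ∂μ) = A at *
  generalize (∫ x, l x ^ q * r x ^ (1 - q) ∂μ) = R at *
  generalize (∑ m, β m * ∫ x, u m x * l x ^ q ∂μ) = W at *
  generalize Z ^ (1 - q) = z at *
  have hqlog : (z - 1) / (1 - q) = -((z - 1) / (q - 1)) := by
    rw [← neg_sub q 1, div_neg]
  rw [hqlog]
  field_simp
  linear_combination (q - 1) * key
end

section
/- Tsallis thermodynamic equation for the generalized partition function: let q > 0, q ≠ 1, r a pdf on X, u_1,…,u_M : X → ℝ measurable. For β ∈ ℝ^M with r(x)^{1−q} − (1−q)·Σ_{m=1}^M β_m u_m(x) > 0 μ-a.e., write Ẑ_q(β) = ∫_X (r(x)^{1−q} − (1−q)·Σ_m β_m u_m(x))^{1/(1−q)} dμ(x) and p_β(x) = (r(x)^{1−q} − (1−q)·Σ_m β_m u_m(x))^{1/(1−q)}/Ẑ_q(β). Fix m and β with Ẑ_q(β) ∈ (0,∞), and suppose there is ε > 0 and an integrable function g such that for all β' with |β'_m − β_m| < ε and β'_j = β_j (j ≠ m): the bracket r^{1−q} − (1−q)Σ_j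 β'_j u_j remains positive μ-a.e., Ẑ_q(β') < ∞, and |u_m(x)|·(r(x)^{1−q} − (1−q)·Σ_j β'_j u_j(x))^{q/(1−q)} ≤ g(x) for μ-a.e. x. Then the function t ↦ ln_q Ẑ_q(β_1,…,t,…,β_M) has derivative at t = β_m equal to −∫_X u_m p_β^q dμ. -/
/-!
The partition function is differentiated under the integral sign and the outer `q`-logarithm is
handled by the chain rule, using `d/dz ln_q z = z^(-q)`.

The hypotheses give positivity and domination for each parameter `t` outside a `t`-dependent null
set, whereas dominated differentiation needs one null set that serves all `t` near `β m`.
Since the bracket is affine in `t`, its values on `[β m - ε/2, β m + ε/2]` lie between its values at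
the two endpoints: positivity at the endpoints propagates, and because a real power is monotone on
the positive reals, so does the bound by `g` (`rpow_le_max_of_mem_uIcc`).
-/

open MeasureTheory Real

open Set Filter Topology

/-- A real power of either sign is bounded on an interval of positive reals by its values at the
endpoints. -/
lemma rpow_le_max_of_mem_uIcc {a b c : ℝ} (p : ℝ) (ha : 0 < a) (hb : 0 < b)
    (hc : c ∈ uIcc a b) : c ^ p ≤ max (a ^ p) (b ^ p) := by
  wlog hab : a ≤ b generalizing a b
  · rw [max_comm]
    exact this hb ha (by rwa [uIcc_comm]) (le_of_not_ge hab)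
  rw [uIcc_of_le hab] at hc
  rcases le_total 0 p with hp | hp
  · exact le_max_of_le_right (rpow_le_rpow (ha.le.trans hc.1) hc.2 hp)
  · exact le_max_of_le_left (rpow_le_rpow_of_nonpos ha hc.1 hp)

/-- An affine function on an interval takes values between its values at the endpoints. -/
lemma affine_mem_uIcc (b k t₀ δ t : ℝ) (ht : t ∈ Icc (t₀ - δ) (t₀ + δ)) :
    b - k * (t - t₀) ∈ uIcc (b - k * ((t₀ - δ) - t₀)) (b - k * ((t₀ + δ) - t₀)) := by
  obtain ⟨h1, h2⟩ := ht
  rw [mem_uIcc]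
  rcases le_total 0 k with hk | hk
  · right
    constructor <;> nlinarith
  · left
    constructor <;> nlinarith

lemma sum_update_mul {M : ℕ} (β v : Fin M → ℝ) (m : Fin M) (t : ℝ) :
    ∑ j, Function.update β m t j * v j = ∑ j, β j * v j + (t - β m) * v m := by
  rw [← sub_eq_iff_eq_add', ← Finset.sum_sub_distrib,
    Finset.sum_eq_single_of_mem m (Finset.mem_univ m)]
  · simp [sub_mul]
  · intro j _ hj
    simp [Function.update_of_ne hj]

lemma hasDerivAt_qlog {q z : ℝ} (hq1 : q ≠ 1) (hz : 0 < z) :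
    HasDerivAt (qlog q) (z ^ (-q)) z := by
  have h1 : 1 - q ≠ 0 := sub_ne_zero.2 hq1.symm
  have h := ((hasDerivAt_rpow_const (p := 1 - q) (Or.inl hz.ne')).sub_const 1).div_const (1 - q)
  refine h.congr_deriv ?_
  rw [mul_div_cancel_left₀ _ h1]
  congr 1
  ring

/-- Tsallis thermodynamic equation: `∂/∂β_m ln_q Ẑ_q(β) = -⟨u_m⟩_q`, i.e. the
map `t ↦ ln_q Ẑ_q(β₁,…,t,…,β_M)` has derivative `-∫ u_m p_β^q dμ` at
`t = β_m`. -/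
theorem thermodynamic_equation_tsallis
    {X : Type*} [MeasurableSpace X] (μ : Measure X) [SigmaFinite μ]
    (q : ℝ) (hq0 : 0 < q) (hq1 : q ≠ 1)
    (M : ℕ) (r : X → ℝ) (hr : IsPdf μ r)
    (u : Fin M → X → ℝ) (hu : ∀ m, Measurable (u m))
    (m : Fin M) (β : Fin M → ℝ)
    (hbracket : ∀ᵐ x ∂μ, 0 < r x ^ (1 - q) - (1 - q) * ∑ j, β j * u j x)
    (hZpos : 0 < ∫ x,
      (r x ^ (1 - q) - (1 - q) * ∑ j, β j * u j x) ^ (1 / (1 - q)) ∂μ)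
    (hZfin : Integrable
      (fun x => (r x ^ (1 - q) - (1 - q) * ∑ j, β j * u j x) ^ (1 / (1 - q))) μ)
    (ε : ℝ) (hε : 0 < ε) (g : X → ℝ) (hg : Integrable g μ)
    (hbracket' : ∀ t : ℝ, |t - β m| < ε → ∀ᵐ x ∂μ,
      0 < r x ^ (1 - q) - (1 - q) * ∑ j, Function.update β m t j * u j x)
    (hfin : ∀ t : ℝ, |t - β m| < ε →
      Integrable (fun x =>
        (r x ^ (1 - q) - (1 - q) * ∑ j, Function.update β m t j * u j x)
          ^ (1 / (1 - q))) μ)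
    (hbound : ∀ t : ℝ, |t - β m| < ε → ∀ᵐ x ∂μ,
      |u m x| *
        (r x ^ (1 - q) - (1 - q) * ∑ j, Function.update β m t j * u j x)
          ^ (q / (1 - q)) ≤ g x) :
    HasDerivAt
      (fun t : ℝ => qlog q (∫ x,
        (r x ^ (1 - q) - (1 - q) * ∑ j, Function.update β m t j * u j x)
          ^ (1 / (1 - q)) ∂μ))
      (- ∫ x, u m x *
        ((r x ^ (1 - q) - (1 - q) * ∑ j, β j * u j x) ^ (1 / (1 - q)) /
          ∫ y, (r y ^ (1 - q) - (1 - q) * ∑ j, β j * u j y) ^ (1 / (1 - q)) ∂μ)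
            ^ q ∂μ)
      (β m) := by
  have h1 : 1 - q ≠ 0 := sub_ne_zero.2 hq1.symm
  set b : X → ℝ := fun x => r x ^ (1 - q) - (1 - q) * ∑ j, β j * u j x with hb
  -- The bracket is affine in the varied parameter.
  have hB : ∀ t x, r x ^ (1 - q) - (1 - q) * ∑ j, Function.update β m t j * u j x
      = b x - ((1 - q) * u m x) * (t - β m) := by
    intro t x
    rw [sum_update_mul β (fun j => u j x) m t, hb]
    ring
  simp only [hB] at hbracket' hfin hbound ⊢
  have hb_meas : Measurable b :=
    (hr.1.pow_const _).sub
      ((Finset.measurable_sum _ fun j _ => (hu j).const_mul (β j)).const_mul _)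
  have hlo : |β m - ε / 2 - β m| < ε := by
    rw [abs_lt]
    constructor <;> linarith
  have hhi : |β m + ε / 2 - β m| < ε := by
    rw [abs_lt]
    constructor <;> linarith
  have hpos : ∀ᵐ x ∂μ, ∀ t ∈ Icc (β m - ε / 2) (β m + ε / 2),
      0 < b x - ((1 - q) * u m x) * (t - β m) := by
    filter_upwards [hbracket' _ hlo, hbracket' _ hhi] with x hx1 hx2 t ht
    exact (lt_min hx1 hx2).trans_le (affine_mem_uIcc _ _ _ _ _ ht).1
  have hdom : ∀ᵐ x ∂μ, ∀ t ∈ Icc (β m - ε / 2) (β m + ε / 2),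
      ‖-(u m x * (b x - ((1 - q) * u m x) * (t - β m)) ^ (q / (1 - q)))‖ ≤ g x := by
    filter_upwards [hbracket' _ hlo, hbracket' _ hhi, hbound _ hlo, hbound _ hhi, hpos]
      with x hx1 hx2 hg1 hg2 hp t ht
    rw [norm_neg, norm_mul, Real.norm_eq_abs, Real.norm_eq_abs,
      abs_of_nonneg (rpow_nonneg (hp t ht).le _)]
    refine (mul_le_mul_of_nonneg_left (rpow_le_max_of_mem_uIcc (q / (1 - q)) hx1 hx2
      (affine_mem_uIcc _ _ _ _ _ ht)) (abs_nonneg _)).trans ?_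
    rw [mul_max_of_nonneg _ _ (abs_nonneg _)]
    exact max_le hg1 hg2
  have hdiff : ∀ᵐ x ∂μ, ∀ t ∈ Icc (β m - ε / 2) (β m + ε / 2),
      HasDerivAt (fun t => (b x - ((1 - q) * u m x) * (t - β m)) ^ (1 / (1 - q)))
        (-(u m x * (b x - ((1 - q) * u m x) * (t - β m)) ^ (q / (1 - q)))) t := by
    filter_upwards [hpos] with x hp t ht
    have haff : HasDerivAt (fun t => b x - ((1 - q) * u m x) * (t - β m))
        (-((1 - q) * u m x)) t := by
      simpa using (((hasDerivAt_id t).sub_const (β m)).const_mul ((1 - q) * u m x)).const_sub (b x)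
    convert haff.rpow_const (p := 1 / (1 - q)) (Or.inl (hp t ht).ne') using 1
    have he : 1 / (1 - q) - 1 = q / (1 - q) := by
      field_simp
      ring
    rw [he]
    field_simp
  have hZ := (hasDerivAt_integral_of_dominated_loc_of_deriv_le (μ := μ) (bound := g)
    (F := fun t x => (b x - ((1 - q) * u m x) * (t - β m)) ^ (1 / (1 - q)))
    (F' := fun t x => -(u m x * (b x - ((1 - q) * u m x) * (t - β m)) ^ (q / (1 - q))))
    (x₀ := β m) (s := Icc (β m - ε / 2) (β m + ε / 2))
    (Icc_mem_nhds (by linarith) (by linarith))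
    (Eventually.of_forall fun t => (((hb_meas.sub
      (((hu m).const_mul _).mul_const _)).pow_const _).aestronglyMeasurable))
    (hfin _ (by simpa using hε))
    ((((hu m).mul ((hb_meas.sub
      (((hu m).const_mul _).mul_const _)).pow_const _)).neg).aestronglyMeasurable)
    hdom hg hdiff).2
  simp only [sub_self, mul_zero, sub_zero] at hZ
  have hZ0 : (∫ x, (b x - ((1 - q) * u m x) * (β m - β m)) ^ (1 / (1 - q)) ∂μ)
      = ∫ x, b x ^ (1 / (1 - q)) ∂μ := by
    simp
  have hchain := HasDerivAt.comp (β m) (by rw [hZ0]; exact hasDerivAt_qlog hq1 hZpos) hZ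
  refine hchain.congr_deriv ?_
  rw [integral_neg, mul_neg, ← integral_const_mul]
  congr 1
  refine integral_congr_ae ?_
  filter_upwards [hbracket] with x hx
  have hbx : 0 < b x := hx
  change _ = u m x * (b x ^ (1 / (1 - q)) / ∫ y, b y ^ (1 / (1 - q)) ∂μ) ^ q
  rw [div_rpow (rpow_nonneg hbx.le _) hZpos.le, ← rpow_mul hbx.le, rpow_neg hZpos.le,
    one_div_mul_eq_div]
  ring
end
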